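/- Let G be the case (II) vector field G(φ₁,φ₂) = (ω + 1·cos φ₁ − κ·cos(φ₁−φ₂), ω + 1·cos φ₂ − κ·cos(φ₂−φ₁)) with a = 1. Suppose κ ∈ ℝ satisfies |κ| > 1/4 and ω = −1/(8κ) − κ, and let φ* ∈ ℝ satisfy cos φ* = 1/(4κ) with sin φ* ≠ 0. Then (φ*, −φ*) is an equilibrium of G lying in Fix R whose Jacobian matrix has zero trace and zero determinant (a double zero eigenvalue). Thus the curve ω = −1/(8κ) − κ, |κ| > 1/4, is the saddle-center bifurcation curve of the case (II) system with a = 1. -/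

import Mathlib

open Real

/-- The case (II) vector field: two identical active rotators with reciprocal
even Kuramoto-type coupling. -/
noncomputable def caseII (ω a κ : ℝ) : ℝ × ℝ → ℝ × ℝ := fun p =>
  (ω + a * Real.cos p.1 - κ * Real.cos (p.1 - p.2),
   ω + a * Real.cos p.2 - κ * Real.cos (p.2 - p.1))

/-- The Jacobian matrix of a planar vector field at a point. -/
noncomputable def jac (F : ℝ × ℝ → ℝ × ℝ) (p : ℝ × ℝ) : Matrix (Fin 2) (Fin 2) ℝ :=
  !![(fderiv ℝ F p (1, 0)).1, (fderiv ℝ F p (0, 1)).1;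
     (fderiv ℝ F p (1, 0)).2, (fderiv ℝ F p (0, 1)).2]

/-!
On `Fix R` the trace of the Jacobian vanishes identically, because the flow is time-reversible, and
its determinant is `a * sin² φ * (4 * κ * cos φ - a)`. If `a` and `sin φ` are nonzero, the
eigenvalue zero is therefore double exactly when `4 * κ * cos φ = a`. Eliminating `cos φ` between
this and the equilibrium condition `ω + a * cos φ = κ * cos (2 * φ)` gives the curve
`ω = -a² / (8 * κ) - κ`.
-/

section

variable (ω a κ : ℝ)

open ContinuousLinearMap (fst snd) in
theorem hasFDerivAt_caseII (p : ℝ × ℝ) :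
    HasFDerivAt (caseII ω a κ)
      (((κ * sin (p.1 - p.2)) • (fst ℝ ℝ ℝ - snd ℝ ℝ ℝ) - (a * sin p.1) • fst ℝ ℝ ℝ).prod
        ((κ * sin (p.2 - p.1)) • (snd ℝ ℝ ℝ - fst ℝ ℝ ℝ) - (a * sin p.2) • snd ℝ ℝ ℝ)) p := by
  have hfst : HasFDerivAt (fun q : ℝ × ℝ => q.1) (fst ℝ ℝ ℝ) p := hasFDerivAt_fst
  have hsnd : HasFDerivAt (fun q : ℝ × ℝ => q.2) (snd ℝ ℝ ℝ) p := hasFDerivAt_snd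
  refine (HasFDerivAt.prodMk
    (((hfst.cos.const_mul a).const_add ω).sub ((hfst.sub hsnd).cos.const_mul κ))
    (((hsnd.cos.const_mul a).const_add ω).sub
      ((hsnd.sub hfst).cos.const_mul κ))).congr_fderiv ?_
  congr 1 <;> module

theorem jac_caseII (p : ℝ × ℝ) :
    jac (caseII ω a κ) p =
      !![κ * sin (p.1 - p.2) - a * sin p.1, -(κ * sin (p.1 - p.2));
         κ * sin (p.1 - p.2), -(κ * sin (p.1 - p.2)) - a * sin p.2] := by
  have sin_swap : sin (p.2 - p.1) = -sin (p.1 - p.2) := by rw [← sin_neg, neg_sub]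
  simp [jac, (hasFDerivAt_caseII ω a κ p).fderiv, sin_swap]

theorem trace_jac_caseII (p : ℝ × ℝ) :
    (jac (caseII ω a κ) p).trace = -a * (sin p.1 + sin p.2) := by
  rw [jac_caseII, Matrix.trace_fin_two_of]
  ring

theorem det_jac_caseII (p : ℝ × ℝ) :
    (jac (caseII ω a κ) p).det =
      a * (a * sin p.1 * sin p.2 + κ * sin (p.1 - p.2) * (sin p.1 - sin p.2)) := by
  rw [jac_caseII, Matrix.det_fin_two_of]
  ring

variable (φ : ℝ)

theorem caseII_self_neg_eq_zero_iff :
    caseII ω a κ (φ, -φ) = 0 ↔ ω + a * cos φ = κ * cos (2 * φ) := by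
  have cos_swap : cos (-φ - φ) = cos (2 * φ) := by rw [← cos_neg]; ring_nf
  simp only [caseII, cos_swap, cos_neg, sub_neg_eq_add, ← two_mul, Prod.mk_eq_zero, and_self,
    sub_eq_zero]

theorem trace_jac_caseII_self_neg : (jac (caseII ω a κ) (φ, -φ)).trace = 0 := by
  simp [trace_jac_caseII]

theorem det_jac_caseII_self_neg :
    (jac (caseII ω a κ) (φ, -φ)).det = a * sin φ ^ 2 * (4 * κ * cos φ - a) := by
  rw [det_jac_caseII, sub_neg_eq_add, ← two_mul, sin_two_mul, sin_neg]
  ring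

end

theorem stmt_18_general {ω a κ φ : ℝ} (hκ : κ ≠ 0) (hω : ω = -a ^ 2 / (8 * κ) - κ)
    (hcos : cos φ = a / (4 * κ)) :
    caseII ω a κ (φ, -φ) = 0 ∧
    (jac (caseII ω a κ) (φ, -φ)).trace = 0 ∧
    (jac (caseII ω a κ) (φ, -φ)).det = 0 := by
  refine ⟨?_, trace_jac_caseII_self_neg ω a κ φ, ?_⟩
  · rw [caseII_self_neg_eq_zero_iff, cos_two_mul, hω, hcos]
    field_simp
    ring
  · have degenerate : 4 * κ * cos φ = a := by
      rw [hcos]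
      field_simp
    rw [det_jac_caseII_self_neg, degenerate, sub_self, mul_zero]

/-- on the saddle-center bifurcation curve
`ω = -1/(8κ) - κ`, `|κ| > 1/4`, of the case (II) system with `a = 1`, the
point `(φ*, -φ*)` with `cos φ* = 1/(4κ)`, `sin φ* ≠ 0` is an equilibrium in
`Fix R` whose Jacobian has zero trace and zero determinant (a double zero
eigenvalue). -/
theorem stmt_18 (ω κ φs : ℝ) (hκ : 1 / 4 < |κ|)
    (hω : ω = -1 / (8 * κ) - κ)
    (hcos : Real.cos φs = 1 / (4 * κ)) (hsin : Real.sin φs ≠ 0) :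
    caseII ω 1 κ (φs, -φs) = 0 ∧
    Matrix.trace (jac (caseII ω 1 κ) (φs, -φs)) = 0 ∧
    Matrix.det (jac (caseII ω 1 κ) (φs, -φs)) = 0 := by
  have hκ₀ : κ ≠ 0 := abs_pos.mp (one_div_pos.mpr four_pos |>.trans hκ)
  exact stmt_18_general hκ₀ (by rwa [one_pow]) hcos
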